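/- Let u be defined by u(t, x) = F_p(t, Δ(t, x)) for x > 0 and u(t, x) = −F_p(t, Δ(t, −x)) for x < 0. Then for every t ∈ (0, π/(2√2)) the one-sided spatial limits of u(t, ·) at 0 exist and satisfy lim_{x → 0⁺} u(t, x) = lim_{x → 0⁻} u(t, x) = 0, while for every t > π/(2√2) they satisfy lim_{x → 0⁺} u(t, x) = −𝒯⁻¹(2t) < 0 and lim_{x → 0⁻} u(t, x) = 𝒯⁻¹(2t) > 0, where 𝒯⁻¹ is the inverse of the increasing period map 𝒯; in particular, for t > π/(2√2), u(t, ·) has an entropic stationary shock at x = 0 (left limit greater than right limit) whose size 2 𝒯⁻¹(2t) is increasing in t. -/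

import Mathlib

open Real Set Filter MeasureTheory
open scoped Topology

/-- The potential `g` from the Hamiltonian `H(x,p) = p²/2 + g(x)`. -/
noncomputable def g (x : ℝ) : ℝ := if |x| ≤ 1 then 1 - (1 - x ^ 2) ^ 4 else 1

/-- The derivative of `g`. -/
noncomputable def g' (x : ℝ) : ℝ := if |x| ≤ 1 then 8 * x * (1 - x ^ 2) ^ 3 else 0

/-- `(q, p)` is a (global) solution of the Hamiltonian system (HS): `q̇ = p`, `ṗ = -g'(q)`. -/
def IsHSSol (q p : ℝ → ℝ) : Prop :=
  (∀ t : ℝ, HasDerivAt q (p t) t) ∧ (∀ t : ℝ, HasDerivAt p (-(g' (q t))) t)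

/-- `F` is the flow of (HS): `F t q₀ p₀ = (q t, p t)` for the solution with data `(q₀, p₀)`. -/
def IsHSFlow (F : ℝ → ℝ → ℝ → ℝ × ℝ) : Prop :=
  ∀ q₀ p₀ : ℝ,
    IsHSSol (fun t => (F t q₀ p₀).1) (fun t => (F t q₀ p₀).2) ∧ F 0 q₀ p₀ = (q₀, p₀)

/-- The set `([0,∞) × {2}) ∪ ({0} × (0,2])`, codomain of the map `Δ`. -/
def Dset : Set (ℝ × ℝ) := (Ici (0:ℝ) ×ˢ ({2} : Set ℝ)) ∪ ({(0:ℝ)} ×ˢ Ioc (0:ℝ) 2)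

/-- `T` is the smallest positive period of `q`. -/
def IsSmallestPeriod (q : ℝ → ℝ) (T : ℝ) : Prop :=
  0 < T ∧ Function.Periodic q T ∧ ∀ T' : ℝ, 0 < T' → Function.Periodic q T' → T ≤ T'

/-- `T` is the period map `𝒯`, assigning to `p₀ ∈ (0, √2)` the smallest positive period of
the `q`-component of the solution of (HS) with initial datum `(0, p₀)`. -/
def IsPeriodMap (F : ℝ → ℝ → ℝ → ℝ × ℝ) (T : ℝ → ℝ) : Prop :=
  ∀ p₀ ∈ Ioo (0:ℝ) (Real.sqrt 2), IsSmallestPeriod (fun t => (F t 0 p₀).1) (T p₀)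

/-- `Δ` associates to `(t,x)` the datum in `Dset` whose orbit stays positive on `(0,t)`
and reaches `x` at time `t`. -/
def IsDeltaMap (F : ℝ → ℝ → ℝ → ℝ × ℝ) (Δ : ℝ → ℝ → ℝ × ℝ) : Prop :=
  ∀ t x : ℝ, 0 < t → 0 < x →
    Δ t x ∈ Dset ∧ (F t (Δ t x).1 (Δ t x).2).1 = x ∧
      ∀ s ∈ Ioo (0:ℝ) t, 0 < (F s (Δ t x).1 (Δ t x).2).1

/-- The solution `u` of the conservation law built from the flow `F` and the map `Δ`
(extended by `0` at `x = 0`). -/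
noncomputable def usol (F : ℝ → ℝ → ℝ → ℝ × ℝ) (Δ : ℝ → ℝ → ℝ × ℝ) (t x : ℝ) : ℝ :=
  if 0 < x then (F t (Δ t x).1 (Δ t x).2).2
  else if x < 0 then -(F t (Δ t (-x)).1 (Δ t (-x)).2).2
  else 0

lemma hh_phi (y : ℝ) : HasDerivAt (fun y : ℝ => (max 0 y) ^ 4) (4 * (max 0 y) ^ 3) y := by
  refine hasDerivAt_of_hasDerivAt_of_ne' (f := fun y : ℝ => (max 0 y) ^ 4)
    (g := fun y : ℝ => 4 * (max 0 y) ^ 3) (x := 0) ?_ ?_ ?_ y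
  · intro y hy
    rcases lt_or_gt_of_ne hy with h | h
    · have h1 : (fun y : ℝ => (max 0 y) ^ 4) =ᶠ[𝓝 y] fun _ => 0 := by
        filter_upwards [Iio_mem_nhds h] with z hz
        rw [max_eq_left (le_of_lt hz)]; norm_num
      have h2 := (hasDerivAt_const y (0:ℝ)).congr_of_eventuallyEq h1
      rw [max_eq_left h.le]; simpa using h2
    · have h1 : (fun y : ℝ => (max 0 y) ^ 4) =ᶠ[𝓝 y] fun y => y ^ 4 := by
        filter_upwards [Ioi_mem_nhds h] with z hz
        rw [max_eq_right (le_of_lt hz)]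
      have h2 := (hasDerivAt_pow 4 y).congr_of_eventuallyEq h1
      rw [max_eq_right h.le]; simpa using h2
  · exact Continuous.continuousAt (by fun_prop)
  · exact Continuous.continuousAt (by fun_prop)

lemma hh_g_eq (x : ℝ) : g x = 1 - (max 0 (1 - x ^ 2)) ^ 4 := by
  unfold g
  split_ifs with h
  · rw [max_eq_right]; have := (sq_le_one_iff_abs_le_one x).2 h; linarith
  · rw [max_eq_left]
    · norm_num
    · have := (sq_le_one_iff_abs_le_one x).not.2 h; linarith

lemma hh_g'_eq (x : ℝ) : g' x = 8 * x * (max 0 (1 - x ^ 2)) ^ 3 := by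
  unfold g'
  split_ifs with h
  · rw [max_eq_right]; have := (sq_le_one_iff_abs_le_one x).2 h; linarith
  · rw [max_eq_left]
    · norm_num
    · have := (sq_le_one_iff_abs_le_one x).not.2 h; linarith

lemma hh_g_deriv (x : ℝ) : HasDerivAt g (g' x) x := by
  have h : g = fun x => 1 - (max 0 (1 - x ^ 2)) ^ 4 := funext hh_g_eq
  rw [h, hh_g'_eq]
  have h1 : HasDerivAt (fun x : ℝ => 1 - x ^ 2) (-(2 * x)) x := by
    simpa using (hasDerivAt_pow 2 x).const_sub 1
  have h2 := ((hh_phi (1 - x ^ 2)).comp x h1).const_sub 1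
  exact h2.congr_deriv (by ring)

lemma hh_g_le (x : ℝ) : g x ≤ 1 := by
  rw [hh_g_eq]; have : 0 ≤ (max 0 (1 - x ^ 2)) ^ 4 := by positivity
  linarith

lemma hh_g_nonneg (x : ℝ) : 0 ≤ g x := by
  rw [hh_g_eq]
  have : (max 0 (1 - x ^ 2)) ^ 4 ≤ 1 := by
    apply pow_le_one₀ (le_max_left _ _)
    apply max_le (by norm_num); nlinarith
  linarith

lemma hh_g_zero : g 0 = 0 := by simp [g]

lemma hh_g'_of_g (x : ℝ) (h : 1 ≤ g x) : g' x = 0 := by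
  rw [hh_g_eq] at h
  have h1 : (max 0 (1 - x ^ 2)) ^ 4 = 0 :=
    le_antisymm (by linarith) (by positivity)
  have h2 : max 0 (1 - x ^ 2) = 0 := by simpa using h1
  rw [hh_g'_eq, h2]; norm_num

lemma hh_g'_neg (x : ℝ) : g' (-x) = - g' x := by
  rw [hh_g'_eq, hh_g'_eq, neg_sq]; ring

lemma hh_g'_lip : LipschitzWith 48 g' := by
  have h1 : LipschitzOnWith 48 (fun x : ℝ => 8 * x * (1 - x ^ 2) ^ 3) (Icc (-1) 1) := by
    apply (convex_Icc (-1:ℝ) 1).lipschitzOnWith_of_nnnorm_hasDerivWithin_le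
      (f' := fun x => 8 * (1 - x ^ 2) ^ 2 * (1 - 7 * x ^ 2))
    · intro x hx
      apply HasDerivAt.hasDerivWithinAt
      have h1 : HasDerivAt (fun x : ℝ => 1 - x ^ 2) (-(2 * x)) x := by
        simpa using (hasDerivAt_pow 2 x).const_sub 1
      have h2 := ((hasDerivAt_id x).const_mul 8).mul (h1.pow 3)
      refine h2.congr_deriv ?_
      simp only [id, Pi.pow_apply]; push_cast; ring
    · intro x hx
      rw [← NNReal.coe_le_coe, coe_nnnorm, Real.norm_eq_abs, abs_mul, abs_mul]
      have hx2 : x ^ 2 ≤ 1 := by nlinarith [hx.1, hx.2]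
      have a1 : |1 - 7 * x ^ 2| ≤ 6 := by rw [abs_le]; constructor <;> nlinarith
      have a2 : |(1 - x ^ 2) ^ 2| ≤ 1 := by
        rw [abs_of_nonneg (by positivity)]
        apply pow_le_one₀ <;> nlinarith
      have : |(8:ℝ)| = 8 := by norm_num
      rw [this]
      have : ((48 : NNReal) : ℝ) = 48 := by norm_num
      rw [this]
      nlinarith [abs_nonneg (1 - 7 * x ^ 2), abs_nonneg ((1 - x ^ 2) ^ 2)]
  have h2 : g' = (fun x : ℝ => 8 * x * (1 - x ^ 2) ^ 3) ∘ (fun x => max (-1) (min 1 x)) := by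
    funext x
    simp only [Function.comp, g']
    split_ifs with h
    · rw [abs_le] at h
      rw [min_eq_right h.2, max_eq_right h.1]
    · rw [abs_le, not_and_or, not_le, not_le] at h
      rcases h with h | h
      · rw [min_eq_right (by linarith), max_eq_left h.le]; norm_num
      · rw [min_eq_left h.le, max_eq_right (by norm_num)]; norm_num
  rw [h2]
  have h3 : LipschitzWith 1 (fun x : ℝ => max (-1) (min 1 x)) :=
    (LipschitzWith.id.const_min 1).const_max (-1)
  rw [← lipschitzOnWith_univ] at h3 ⊢
  have h4 := h1.comp h3 (by
    intro x _
    refine ⟨le_max_left _ _, max_le (by norm_num) (min_le_left _ _)⟩)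
  simpa using h4

lemma hh_v_lip : LipschitzWith 48 (fun z : ℝ × ℝ => (z.2, -(g' z.1))) := by
  have h1 : LipschitzWith 48 (fun z : ℝ × ℝ => -(g' z.1)) := by
    have h0 : LipschitzWith 1 (fun z : ℝ × ℝ => z.1) := LipschitzWith.prod_fst
    have := (hh_g'_lip.comp h0).neg
    rw [mul_one] at this
    exact this
  have h2 : LipschitzWith 1 (fun z : ℝ × ℝ => z.2) := LipschitzWith.prod_snd
  have h3 := h2.prodMk h1
  exact h3.weaken (by norm_num)

lemma hh_pair {q p : ℝ → ℝ} (h : IsHSSol q p) (t : ℝ) :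
    HasDerivAt (fun t => (q t, p t)) (p t, -(g' (q t))) t :=
  (h.1 t).prodMk (h.2 t)

lemma hh_unique {q p q2 p2 : ℝ → ℝ} (h : IsHSSol q p) (h2 : IsHSSol q2 p2) (t0 : ℝ)
    (e1 : q t0 = q2 t0) (e2 : p t0 = p2 t0) (t : ℝ) : q t = q2 t ∧ p t = p2 t := by
  have := ODE_solution_unique_univ (v := fun _ (z : ℝ × ℝ) => (z.2, -(g' z.1)))
    (s := fun _ => univ) (K := 48) (f := fun t => (q t, p t)) (g := fun t => (q2 t, p2 t))
    (t₀ := t0) (fun _ => hh_v_lip.lipschitzOnWith) (fun t => ⟨hh_pair h t, trivial⟩)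
    (fun t => ⟨hh_pair h2 t, trivial⟩) (by simp [e1, e2])
  have := congrFun this t
  simpa using this

lemma hh_energy {q p : ℝ → ℝ} (h : IsHSSol q p) (t : ℝ) :
    p t ^ 2 + 2 * g (q t) = p 0 ^ 2 + 2 * g (q 0) := by
  have hd : ∀ t, HasDerivAt (fun t => p t ^ 2 + 2 * g (q t)) 0 t := by
    intro t
    have h1 := ((h.2 t).pow 2).add (((hh_g_deriv (q t)).comp t (h.1 t)).const_mul 2)
    refine h1.congr_deriv ?_
    push_cast; ring
  exact is_const_of_deriv_eq_zero (fun t => (hd t).differentiableAt) (fun t => (hd t).deriv) t 0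

lemma hh_cont {F : ℝ → ℝ → ℝ → ℝ × ℝ} (hF : IsHSFlow F) (s : ℝ) (hs : 0 ≤ s) :
    Continuous (fun b => F s 0 b) := by
  apply LipschitzWith.continuous (K := ⟨exp (48 * s), (exp_pos _).le⟩)
  apply LipschitzWith.of_dist_le_mul
  intro b c
  have hcont : ∀ b, ContinuousOn (fun t => F t 0 b) (Icc 0 s) := fun b t _ =>
    (hh_pair (hF 0 b).1 t).continuousAt.continuousWithinAt
  have := dist_le_of_trajectories_ODE (v := fun _ (z : ℝ × ℝ) => (z.2, -(g' z.1))) (K := 48)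
    (f := fun t => F t 0 b) (g := fun t => F t 0 c) (a := 0) (b := s) (δ := dist b c)
    (fun _ => hh_v_lip) (hcont b)
    (fun t _ => (hh_pair (hF 0 b).1 t).hasDerivWithinAt) (hcont c)
    (fun t _ => (hh_pair (hF 0 c).1 t).hasDerivWithinAt)
    (by simp [(hF 0 b).2, (hF 0 c).2, Prod.dist_eq]) s ⟨hs, le_rfl⟩
  rw [mul_comm]
  have h2 : dist (F s 0 b) (F s 0 c) ≤ dist b c * rexp (48 * s) := by simpa using this
  exact h2

/-- oddness in time -/
lemma hh_odd {q p : ℝ → ℝ} (h : IsHSSol q p) (h0 : q 0 = 0) (t : ℝ) : q (-t) = - q t := by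
  have h2 : IsHSSol (fun t => - q (-t)) (fun t => p (-t)) := by
    constructor
    · intro t
      have := ((h.1 (-t)).comp t (hasDerivAt_neg t)).neg
      exact this.congr_deriv (by ring)
    · intro t
      have := ((h.2 (-t)).comp t (hasDerivAt_neg t))
      exact this.congr_deriv (by rw [hh_g'_neg]; ring)
  have := (hh_unique h h2 0 (by simp [h0]) (by simp) t).1
  linarith

lemma hh_shift {q p : ℝ → ℝ} (h : IsHSSol q p) (a : ℝ) :
    IsHSSol (fun t => q (t + a)) (fun t => p (t + a)) :=
  ⟨fun t => (h.1 (t + a)).comp_add_const t a, fun t => (h.2 (t + a)).comp_add_const t a⟩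

lemma hh_negsol {q p : ℝ → ℝ} (h : IsHSSol q p) :
    IsHSSol (fun t => - q t) (fun t => - p t) :=
  ⟨fun t => (h.1 t).neg, fun t => (h.2 t).neg.congr_deriv (by rw [hh_g'_neg])⟩

/-- orbit nonnegative on (0,t) implies t ≤ T/2 -/
lemma hh_A1 {q p : ℝ → ℝ} (h : IsHSSol q p) (h0 : q 0 = 0) (hp : p 0 ≠ 0) {T : ℝ}
    (hT : IsSmallestPeriod q T) {t : ℝ} (hpos : ∀ s ∈ Ioo 0 t, 0 ≤ q s) : 2 * t ≤ T := by
  by_contra hlt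
  push Not at hlt
  have hT0 := hT.1
  have hq : q (T / 2) = 0 := by
    have h1 := hh_odd h h0 (T / 2)
    have h2 := hT.2.1 (-(T / 2))
    have : -(T / 2) + T = T / 2 := by ring
    rw [this] at h2
    linarith
  have hmin : IsLocalMin q (T / 2) := by
    filter_upwards [Ioo_mem_nhds (show 0 < T / 2 by linarith) (show T / 2 < t by linarith)]
      with s hs
    rw [hq]; exact hpos s hs
  have hz := hmin.hasDerivAt_eq_zero (h.1 _)
  have he := hh_energy h (T / 2)
  rw [hz, hq, h0] at he
  apply hp
  have : p 0 ^ 2 = 0 := by linarith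
  simpa using this

lemma hh_A2 {q p : ℝ → ℝ} (h : IsHSSol q p) (h0 : q 0 = 0) (hp : p 0 ≠ 0) {T : ℝ}
    (hT : IsSmallestPeriod q T) {t : ℝ} (ht : 0 < t) (hpos : ∀ s ∈ Ioo 0 t, 0 ≤ q s)
    (hqt : q t = 0) : T = 2 * t ∧ p t = - p 0 := by
  have h1 := hh_A1 h h0 hp hT hpos
  have he := hh_energy h t
  rw [hqt, h0] at he
  have : p t = p 0 ∨ p t = - p 0 := sq_eq_sq_iff_eq_or_eq_neg.1 (by linarith)
  rcases this with hc | hc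
  · have hper : Function.Periodic q t := fun s =>
      (hh_unique (hh_shift h t) h 0 (by simp [hqt, h0]) (by simp [hc]) s).1
    have := hT.2.2 t ht hper
    linarith
  · refine ⟨le_antisymm (hT.2.2 _ (by linarith) ?_) h1, hc⟩
    have key : ∀ s, q (s + t) = - q s := fun s =>
      (hh_unique (hh_shift h t) (hh_negsol h) 0 (by simp [hqt, h0]) (by simp [hc]) s).1
    intro s
    have : s + 2 * t = (s + t) + t := by ring
    rw [this, key, key, neg_neg]

lemma hh_A3 {q p : ℝ → ℝ} (h : IsHSSol q p) (h0 : q 0 = 0) {t : ℝ}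
    (hT : IsSmallestPeriod q (2 * t)) : p t = - p 0 := by
  have hT0 := hT.1
  have hqt : q t = 0 := by
    have h1 := hh_odd h h0 t
    have h2 := hT.2.1 (-t)
    have : -t + 2 * t = t := by ring
    rw [this] at h2
    linarith
  have he := hh_energy h t
  rw [hqt, h0] at he
  have : p t = p 0 ∨ p t = - p 0 := sq_eq_sq_iff_eq_or_eq_neg.1 (by linarith)
  rcases this with hc | hc
  · have hper : Function.Periodic q t := fun s =>
      (hh_unique (hh_shift h t) h 0 (by simp [hqt, h0]) (by simp [hc]) s).1
    have := hT.2.2 t (by linarith) hper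
    linarith
  · exact hc

lemma hh_B {q p : ℝ → ℝ} (h : IsHSSol q p) (h0 : q 0 = 0) (hp : 2 ≤ p 0 ^ 2)
    {t : ℝ} (ht : 0 < t) (hqt : q t = 0) : False := by
  obtain ⟨c, -, hc⟩ := exists_hasDerivAt_eq_zero ht
    (fun s _ => (h.1 s).continuousAt.continuousWithinAt) (h0.trans hqt.symm) (fun s _ => h.1 s)
  have he := hh_energy h c
  rw [hc, h0, hh_g_zero] at he
  have hg : 1 ≤ g (q c) := by linarith
  have hg' := hh_g'_of_g _ hg
  have hconst : IsHSSol (fun _ => q c) (fun _ => 0) :=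
    ⟨fun s => hasDerivAt_const _ _, fun s => by
      simpa [hg'] using hasDerivAt_const s (0:ℝ)⟩
  have := (hh_unique h hconst c rfl hc 0).1
  simp only [h0] at this
  rw [← this, hh_g_zero] at hg
  linarith

lemma hh_two {q p : ℝ → ℝ} (h : IsHSSol q p) (h0 : 0 ≤ q 0) (hp : p 0 = 2)
    {t : ℝ} (ht : 0 < t) : t ≤ q t := by
  have hsq : ∀ s, 2 ≤ p s ^ 2 := by
    intro s
    have he := hh_energy h s
    have := hh_g_le (q s)
    have := hh_g_nonneg (q 0)
    rw [hp] at he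
    linarith
  have hcont : Continuous p := continuous_iff_continuousAt.2 fun s => (h.2 s).continuousAt
  have hpos : ∀ s, 0 < p s := by
    intro s
    by_contra hn
    push Not at hn
    obtain ⟨c, hc⟩ := mem_range_of_exists_le_of_exists_ge hcont ⟨s, hn⟩ ⟨0, by rw [hp]; norm_num⟩
    have := hsq c
    rw [hc] at this
    norm_num at this
  obtain ⟨c, -, hc⟩ := exists_hasDerivAt_eq_slope q p ht
    (fun s _ => (h.1 s).continuousAt.continuousWithinAt) (fun s _ => h.1 s)
  have h1 : 1 ≤ p c := by nlinarith [hpos c, hsq c]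
  rw [hc, le_div_iff₀ (by linarith)] at h1
  linarith

lemma hh_delta {F : ℝ → ℝ → ℝ → ℝ × ℝ} (hF : IsHSFlow F)
    {Δ : ℝ → ℝ → ℝ × ℝ} (hΔ : IsDeltaMap F Δ) {t x : ℝ} (ht : 0 < t) (hx : 0 < x) (hxt : x < t) :
    Δ t x = (0, (Δ t x).2) ∧ (Δ t x).2 ∈ Ioc (0:ℝ) 2 ∧ (F t 0 (Δ t x).2).1 = x ∧
      ∀ s ∈ Ioo (0:ℝ) t, 0 < (F s 0 (Δ t x).2).1 := by
  obtain ⟨h1, h2, h3⟩ := hΔ t x ht hx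
  have ha : (Δ t x).1 = 0 ∧ (Δ t x).2 ∈ Ioc (0:ℝ) 2 := by
    rcases h1 with h1 | h1
    · exfalso
      have hi := hF (Δ t x).1 (Δ t x).2
      have := hh_two hi.1 (by simpa [hi.2] using h1.1) (by simpa [hi.2] using h1.2) ht
      simp only [h2] at this
      linarith
    · exact ⟨h1.1, h1.2⟩
  rw [ha.1] at h2 h3
  exact ⟨Prod.ext ha.1 rfl, ha.2, h2, h3⟩

lemma hh_usol {F : ℝ → ℝ → ℝ → ℝ × ℝ} {Δ : ℝ → ℝ → ℝ × ℝ} {t l : ℝ}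
    (h : Tendsto (fun x => usol F Δ t x) (𝓝[>] 0) (𝓝 l)) :
    Tendsto (fun x => usol F Δ t x) (𝓝[<] 0) (𝓝 (-l)) := by
  have h1 : Tendsto (fun x : ℝ => -x) (𝓝[<] 0) (𝓝[>] 0) := by
    simpa using tendsto_neg_nhdsLT (a := (0:ℝ))
  refine (h.comp h1).neg.congr' ?_
  filter_upwards [self_mem_nhdsWithin] with x hx
  have hx' : x < 0 := hx
  simp [usol, hx', not_lt.2 hx'.le]

/-- main convergence -/
lemma hh_main {F : ℝ → ℝ → ℝ → ℝ × ℝ} (hF : IsHSFlow F)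
    {Δ : ℝ → ℝ → ℝ × ℝ} (hΔ : IsDeltaMap F Δ) {t : ℝ} (ht : 0 < t) {m b : ℝ}
    (hm : ∀ᶠ x in 𝓝[>] (0:ℝ), m ≤ (Δ t x).2)
    (hu : ∀ c ∈ Icc m 2, (F t 0 c).1 = 0 → (∀ s ∈ Ioo 0 t, 0 ≤ (F s 0 c).1) → c = b) :
    Tendsto (fun x => usol F Δ t x) (𝓝[>] 0) (𝓝 (F t 0 b).2) := by
  have hev : ∀ᶠ x in 𝓝[>] (0:ℝ), 0 < x ∧ x < t := by
    filter_upwards [Ioo_mem_nhdsGT ht] with x hx using hx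
  have hlim : Tendsto (fun x => (Δ t x).2) (𝓝[>] 0) (𝓝 b) := by
    apply (isCompact_Icc (a := m) (b := 2)).tendsto_nhds_of_unique_mapClusterPt
    · filter_upwards [hm, hev] with x h1 h2
      exact ⟨h1, (hh_delta hF hΔ ht h2.1 h2.2).2.1.2⟩
    · intro c hc hcl
      have hcc : ∀ s, 0 ≤ s → ContinuousAt (fun b => (F s 0 b).1) c := fun s hs =>
        (continuous_fst.comp (hh_cont hF s hs)).continuousAt
      apply hu c hc
      · have h1 := hcl.continuousAt_comp (hcc t ht.le)
        have h2 : Tendsto ((fun b => (F t 0 b).1) ∘ fun x => (Δ t x).2) (𝓝[>] 0) (𝓝 0) := by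
          have h3 : Tendsto (fun x : ℝ => x) (𝓝[>] 0) (𝓝 0) := nhdsWithin_le_nhds
          refine h3.congr' ?_
          filter_upwards [hev] with x h2
          exact (hh_delta hF hΔ ht h2.1 h2.2).2.2.1.symm
        by_contra hne
        obtain ⟨U, V, hU, hV, hcU, h0V, hd⟩ := t2_separation hne
        have h5 := h1.frequently (hU.mem_nhds hcU)
        obtain ⟨x, hx1, hx2⟩ := (h5.and_eventually (h2.eventually (hV.mem_nhds h0V))).exists
        exact Set.disjoint_left.1 hd hx1 hx2
      · intro s hs
        have h1 := hcl.continuousAt_comp (hcc s hs.1.le)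
        by_contra hne
        push Not at hne
        have h5 := h1.frequently (Iio_mem_nhds hne)
        obtain ⟨x, hx1, hx2⟩ := (h5.and_eventually hev).exists
        have := (hh_delta hF hΔ ht hx2.1 hx2.2).2.2.2 s hs
        exact lt_asymm this hx1
  have h1 := ((continuous_snd.comp (hh_cont hF t ht.le)).tendsto b).comp hlim
  refine h1.congr' ?_
  filter_upwards [hev] with x hx
  have := (hh_delta hF hΔ ht hx.1 hx.2).1
  have h0 : (Δ t x).1 = 0 := by rw [this]
  simp [usol, hx.1, h0]

/-- Behavior of `u(t,·)` near `x = 0`: for `t < π/(2√2)` both one-sided limits at `0`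
vanish; for `t > π/(2√2)` the right limit is `-𝒯⁻¹(2t) < 0` and the left limit is
`𝒯⁻¹(2t) > 0`, so `u(t,·)` has an entropic stationary shock at `0` whose size
`2𝒯⁻¹(2t)` is increasing in `t`. -/
theorem stmt_19 (F : ℝ → ℝ → ℝ → ℝ × ℝ) (hF : IsHSFlow F)
    (Δ : ℝ → ℝ → ℝ × ℝ) (hΔ : IsDeltaMap F Δ)
    (T : ℝ → ℝ) (hT : IsPeriodMap F T)
    (hTmono : StrictMonoOn T (Ioo 0 (Real.sqrt 2)))
    (hTcont : ContinuousOn T (Ioo 0 (Real.sqrt 2)))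
    (hTsurj : T '' Ioo (0:ℝ) (Real.sqrt 2) = Ioi (π / Real.sqrt 2))
    (Tinv : ℝ → ℝ)
    (hTinv : ∀ y ∈ Ioi (π / Real.sqrt 2),
      Tinv y ∈ Ioo (0:ℝ) (Real.sqrt 2) ∧ T (Tinv y) = y) :
    (∀ t ∈ Ioo (0:ℝ) (π / (2 * Real.sqrt 2)),
      Tendsto (fun x => usol F Δ t x) (𝓝[>] 0) (𝓝 0) ∧
      Tendsto (fun x => usol F Δ t x) (𝓝[<] 0) (𝓝 0)) ∧
    (∀ t : ℝ, π / (2 * Real.sqrt 2) < t →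
      Tendsto (fun x => usol F Δ t x) (𝓝[>] 0) (𝓝 (-(Tinv (2 * t)))) ∧
      Tendsto (fun x => usol F Δ t x) (𝓝[<] 0) (𝓝 (Tinv (2 * t))) ∧
      0 < Tinv (2 * t)) ∧
    StrictMonoOn (fun t => 2 * Tinv (2 * t)) (Ioi (π / (2 * Real.sqrt 2))) := by
  have hs2 : 0 < Real.sqrt 2 := by positivity
  have hpi : π / Real.sqrt 2 = 2 * (π / (2 * Real.sqrt 2)) := by field_simp
  have hbig : ∀ c t : ℝ, Real.sqrt 2 ≤ c → 0 < t → (F t 0 c).1 = 0 → False := by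
    intro c t hc ht h
    have hi := hF 0 c
    refine hh_B hi.1 (by simp [hi.2]) ?_ ht h
    simp only [hi.2]
    have := Real.sq_sqrt (show (0:ℝ) ≤ 2 by norm_num)
    nlinarith
  have hA1 : ∀ c ∈ Ioo 0 (Real.sqrt 2), ∀ t, (∀ s ∈ Ioo 0 t, 0 ≤ (F s 0 c).1) → 2 * t ≤ T c := by
    intro c hc t h
    have hi := hF 0 c
    exact hh_A1 hi.1 (by simp [hi.2]) (by simpa [hi.2] using hc.1.ne') (hT c hc) h
  have hA2 : ∀ c ∈ Ioo 0 (Real.sqrt 2), ∀ t, 0 < t → (F t 0 c).1 = 0 →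
      (∀ s ∈ Ioo 0 t, 0 ≤ (F s 0 c).1) → T c = 2 * t ∧ (F t 0 c).2 = - c := by
    intro c hc t ht h0 h
    have hi := hF 0 c
    have := hh_A2 hi.1 (by simp [hi.2]) (by simpa [hi.2] using hc.1.ne') (hT c hc) ht h h0
    simpa [hi.2] using this
  refine ⟨?_, ?_, ?_⟩
  · intro t ht
    have h0 : (F t 0 0).2 = 0 := by
      have hi := hF 0 0
      have hc : IsHSSol (fun _ => 0) (fun _ => 0) :=
        ⟨fun s => hasDerivAt_const _ _, fun s => by
          simpa [g'] using hasDerivAt_const s (0:ℝ)⟩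
      exact (hh_unique hi.1 hc 0 (by simp [hi.2]) (by simp [hi.2]) t).2
    have h1 : Tendsto (fun x => usol F Δ t x) (𝓝[>] 0) (𝓝 0) := by
      have := hh_main hF hΔ ht.1 (m := 0) (b := 0) ?_ ?_
      · rwa [h0] at this
      · filter_upwards [Ioo_mem_nhdsGT ht.1] with x hx
        exact (hh_delta hF hΔ ht.1 hx.1 hx.2).2.1.1.le
      · intro c hc hz hp
        by_contra hne
        have hc0 : 0 < c := lt_of_le_of_ne hc.1 (Ne.symm hne)
        rcases lt_or_ge c (Real.sqrt 2) with h | h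
        · have h2 := (hA2 c ⟨hc0, h⟩ t ht.1 hz hp).1
          have h3 : T c ∈ Ioi (π / Real.sqrt 2) := hTsurj ▸ mem_image_of_mem T ⟨hc0, h⟩
          have h4 : π / Real.sqrt 2 < T c := h3
          have := ht.2
          linarith
        · exact hbig c t h ht.1 hz
    exact ⟨h1, by simpa using hh_usol h1⟩
  · intro t ht
    have ht0 : 0 < t := lt_trans (by positivity) ht
    obtain ⟨hI, hTe⟩ := hTinv (2 * t) (show π / Real.sqrt 2 < 2 * t by linarith)
    have hlow : ∀ᶠ x in 𝓝[>] (0:ℝ), Tinv (2 * t) ≤ (Δ t x).2 := by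
      filter_upwards [Ioo_mem_nhdsGT ht0] with x hx
      obtain ⟨-, h1, h2, h3⟩ := hh_delta hF hΔ ht0 hx.1 hx.2
      rcases lt_or_ge (Δ t x).2 (Real.sqrt 2) with h | h
      · have := hA1 _ ⟨h1.1, h⟩ t (fun s hs => (h3 s hs).le)
        rw [← hTe] at this
        exact (hTmono.le_iff_le hI ⟨h1.1, h⟩).1 this
      · exact hI.2.le.trans h
    have huniq : ∀ c ∈ Icc (Tinv (2 * t)) 2, (F t 0 c).1 = 0 →
        (∀ s ∈ Ioo 0 t, 0 ≤ (F s 0 c).1) → c = Tinv (2 * t) := by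
      intro c hc hz hp
      rcases lt_or_ge c (Real.sqrt 2) with h | h
      · have hcI : c ∈ Ioo 0 (Real.sqrt 2) := ⟨hI.1.trans_le hc.1, h⟩
        have h2 := hA2 c hcI t ht0 hz hp
        exact hTmono.injOn hcI hI (h2.1.trans hTe.symm)
      · exact (hbig c t h ht0 hz).elim
    have h1 := hh_main hF hΔ ht0 hlow huniq
    have hval : (F t 0 (Tinv (2 * t))).2 = - Tinv (2 * t) := by
      have hi := hF 0 (Tinv (2 * t))
      have h3 := hT _ hI
      rw [hTe] at h3
      have := hh_A3 hi.1 (by simp [hi.2]) h3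
      simpa [hi.2] using this
    rw [hval] at h1
    exact ⟨h1, by simpa using hh_usol h1, hI.1⟩
  · intro s hs t ht hst
    have hs' : π / (2 * Real.sqrt 2) < s := hs
    have ht' : π / (2 * Real.sqrt 2) < t := ht
    obtain ⟨hI, hTe⟩ := hTinv (2 * s) (show π / Real.sqrt 2 < 2 * s by linarith)
    obtain ⟨hI2, hTe2⟩ := hTinv (2 * t) (show π / Real.sqrt 2 < 2 * t by linarith)
    have : Tinv (2 * s) < Tinv (2 * t) := (hTmono.lt_iff_lt hI hI2).1 (by rw [hTe, hTe2]; linarith)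
    simp only
    linarith
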